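/- There is a universal constant c ≥ 1 such that: for every integer Δ ≥ 3, every δ ∈ (0,1), every λ > 0 that is up-to-Δ unique with gap δ, and every finite tree T of maximum degree at most Δ rooted at a vertex r, the total R-pseudoinfluence on the root satisfies ∑_{v ∈ T, v ≠ r} ℛ_r^v ≤ exp(c/δ). -/

import Mathlib

open scoped Classical
open Finset

noncomputable section

namespace PaperStmt

variable {V : Type*} [Fintype V]

/-- The set of vertices at distance exactly `ℓ` from the root `r`. -/
def levelSet (G : SimpleGraph V) (r : V) (ℓ : ℕ) : Finset V :=
  Finset.univ.filter fun v => G.dist r v = ℓ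

/-- `S` is an independent set of `G`. -/
def IsIndepSet (G : SimpleGraph V) (S : Finset V) : Prop :=
  ∀ i ∈ S, ∀ j ∈ S, ¬ G.Adj i j

/-- Weight of `S` in the level-`ℓ` pinned hardcore measure on the truncation
`T^{≤ℓ}`: the vertices in `P` (a subset of level `ℓ`) have their marginals pinned
by `p`, vertices strictly inside the ball contribute a factor `λ`. -/
def pinWeight (G : SimpleGraph V) (r : V) (lam : ℝ) (ℓ : ℕ) (P : Finset V)
    (p : V → ℝ) (S : Finset V) : ℝ :=
  if IsIndepSet G S ∧ ∀ v ∈ S, G.dist r v ≤ ℓ then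
    lam ^ (S.filter fun v => G.dist r v < ℓ).card
      * (∏ u ∈ P ∩ S, p u) * (∏ u ∈ P \ S, (1 - p u))
  else 0

/-- Probability that `x ∈ S` under the distribution proportional to the weight `w`. -/
def prMem (w : Finset V → ℝ) (x : V) : ℝ :=
  (∑ S : Finset V, if x ∈ S then w S else 0) / (∑ S : Finset V, w S)

/-- The ratio `R = Pr[x ∈ S] / (1 - Pr[x ∈ S])` for the distribution proportional
to the weight `w`. -/
def ratio (w : Finset V → ℝ) (x : V) : ℝ := prMem w x / (1 - prMem w x)

/-- Weight realizing `ν_p^{v,in}`: the level-`ℓ(v)` pinned measure with `v`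
conditioned to be in `S` and the other level-`ℓ(v)` vertices pinned by `p`. -/
def wIn (G : SimpleGraph V) (r : V) (lam : ℝ) (v : V) (p : V → ℝ) :
    Finset V → ℝ :=
  fun S => if v ∈ S then
    pinWeight G r lam (G.dist r v) ((levelSet G r (G.dist r v)).erase v) p S else 0

/-- Weight realizing `ν_p^{v,out}`. -/
def wOut (G : SimpleGraph V) (r : V) (lam : ℝ) (v : V) (p : V → ℝ) :
    Finset V → ℝ :=
  fun S => if v ∉ S then
    pinWeight G r lam (G.dist r v) ((levelSet G r (G.dist r v)).erase v) p S else 0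

/-- The `R`-pseudoinfluence `ℛ_r^v` of `v` on the root `r`. -/
def Rpseudo (G : SimpleGraph V) (r : V) (lam : ℝ) (v : V) : ℝ :=
  sSup {x : ℝ | ∃ p : V → ℝ, (∀ u, 0 ≤ p u ∧ p u ≤ 1) ∧
    x = |ratio (wIn G r lam v p) r - ratio (wOut G r lam v p) r|}

/-- The pseudoinfluence `ℐ_r^v` of `v` on the root `r` (probability version). -/
def Ipseudo (G : SimpleGraph V) (r : V) (lam : ℝ) (v : V) : ℝ :=
  sSup {x : ℝ | ∃ p : V → ℝ, (∀ u, 0 ≤ p u ∧ p u ≤ 1) ∧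
    x = |prMem (wIn G r lam v p) r - prMem (wOut G r lam v p) r|}

/-- The vertex set of the subtree `T_u`: vertices `w` such that `u` lies on the
path from `r` to `w`. -/
def subtreeSet (G : SimpleGraph V) (r u : V) : Set V :=
  {w | G.dist r w = G.dist r u + G.dist u w}

/-- The subtree `T_u` as an induced subgraph. -/
def subtree (G : SimpleGraph V) (r u : V) : SimpleGraph (subtreeSet G r u) :=
  G.induce (subtreeSet G r u)

/-- `λ` is up-to-`Δ` unique with gap `δ`. -/
def UpToUnique (Δ : ℕ) (lam δ : ℝ) : Prop :=
  ∀ d : ℕ, 1 ≤ d → d ≤ Δ - 1 → ∀ R : ℝ, 0 < R → lam = R * (1 + R) ^ d →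
    (d : ℝ) * R / (1 + R) ≤ 1 - δ

/-- At a common occupation probability `a` of `n` children, the decay rate is at most its value at
the fixed point `R`. -/
theorem mul_occupation_le {n : ℕ} {R a : ℝ} (hR : 0 < R) (hs : n * R / (1 + R) ≤ 1)
    (ha1 : a < 1) :
    n * a * (R * (1 + R) ^ n * (1 - a) ^ n / (1 + R * (1 + R) ^ n * (1 - a) ^ n)) ≤
      R / (1 + R) := by
  have hc : 0 < 1 + R := by linarith
  set y := (1 + R) * (1 - a) with hy
  have hy0 : 0 < y := mul_pos hc (by linarith)
  have hyn : 0 < y ^ n := pow_pos hy0 n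
  have hF : R * (1 + R) ^ n * (1 - a) ^ n = R * y ^ n := by rw [hy, mul_pow]; ring
  rw [hF]
  have hbern : 1 + n * (1 / y - 1) ≤ (1 / y) ^ n := by
    have h := one_add_mul_le_pow (a := 1 / y - 1)
      (by have : 0 < 1 / y := by positivity
          linarith) n
    simpa using h
  have hs' : n * R ≤ 1 + R := by rwa [div_le_one hc] at hs
  have hyy : 2 ≤ y + 1 / y := by
    have : y + 1 / y - 2 = (y - 1) ^ 2 / y := by field_simp; ring
    have h2 : 0 ≤ (y - 1) ^ 2 / y := by positivity
    linarith
  have hmain : n * a * (1 + R) ≤ (1 / y) ^ n + R := by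
    have h1 : (n : ℝ) * 2 ≤ n * (y + 1 / y) := by gcongr
    have h2 : n * a * (1 + R) = n * (1 + R) - n * y := by rw [hy]; ring
    nlinarith
  have h3 : R * y ^ n / (1 + R * y ^ n) = R / ((1 / y) ^ n + R) := by
    rw [one_div, inv_pow]
    field_simp
  have hz : 0 < (1 / y) ^ n + R := by positivity
  rw [h3, ← mul_div_assoc, div_le_div_iff₀ hz hc]
  nlinarith

/-- The decay rate of the hardcore recursion in the coordinate `arsinh √R` is at most `√(1 - δ)`. -/
theorem sqrt_mul_sum_sqrt_le {ι : Type*} (s : Finset ι) (a : ι → ℝ) (ha0 : ∀ i, 0 ≤ a i)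
    (ha1 : ∀ i, a i < 1) {R δ lam : ℝ} (hR : 0 < R) (hlam : lam = R * (1 + R) ^ s.card)
    (hs : s.card * R / (1 + R) ≤ 1 - δ) (hδ : 0 < δ) :
    √((lam * ∏ i ∈ s, (1 - a i)) / (1 + lam * ∏ i ∈ s, (1 - a i))) * ∑ i ∈ s, √(a i) ≤
      √(1 - δ) := by
  rcases s.eq_empty_or_nonempty with rfl | hne
  · simp
  have hn : (0 : ℝ) < s.card := by exact_mod_cast hne.card_pos
  obtain ⟨F, hF⟩ : ∃ F, F = lam * ∏ i ∈ s, (1 - a i) := ⟨_, rfl⟩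
  rw [← hF]
  have hlam0 : 0 < lam := by rw [hlam]; positivity
  have hF0 : 0 < F := hF ▸ mul_pos hlam0 (Finset.prod_pos fun i _ => by linarith [ha1 i])
  obtain ⟨b, hbs⟩ : ∃ b, ∑ i ∈ s, a i = s.card * b :=
    ⟨(∑ i ∈ s, a i) / s.card, by field_simp⟩
  have hb1 : b < 1 := by
    have h : ∑ i ∈ s, a i < ∑ i ∈ s, (1 : ℝ) := Finset.sum_lt_sum_of_nonempty hne fun i _ => ha1 i
    simp only [hbs, Finset.sum_const, nsmul_eq_mul] at h
    exact lt_of_mul_lt_mul_left h hn.le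
  have hprod : ∏ i ∈ s, (1 - a i) ≤ (1 - b) ^ s.card := by
    have h := Real.geom_mean_le_arith_mean s (fun _ => 1) (fun i => 1 - a i) (fun _ _ => zero_le_one)
      (by simpa using hn) (fun i _ => by linarith [ha1 i])
    have hp : 0 ≤ ∏ i ∈ s, (1 - a i) := Finset.prod_nonneg fun i _ => by linarith [ha1 i]
    simp only [Real.rpow_one, one_mul, Finset.sum_const, nsmul_eq_mul, mul_one,
      Finset.sum_sub_distrib, hbs] at h
    have h' := pow_le_pow_left₀ (by positivity) h s.card
    rw [Real.rpow_inv_natCast_pow hp hne.card_ne_zero] at h'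
    refine h'.trans_eq ?_
    congr 1
    field_simp
  have hFle : F ≤ R * (1 + R) ^ s.card * (1 - b) ^ s.card := by
    rw [hF, ← hlam]; gcongr
  have hmono : F / (1 + F) ≤ R * (1 + R) ^ s.card * (1 - b) ^ s.card /
      (1 + R * (1 + R) ^ s.card * (1 - b) ^ s.card) := by
    rw [div_le_div_iff₀ (by linarith) (by linarith)]
    nlinarith
  have hb0 : 0 ≤ b :=
    nonneg_of_mul_nonneg_right (hbs ▸ Finset.sum_nonneg fun i _ => ha0 i) hn
  have hsq : (∑ i ∈ s, √(a i)) ^ 2 ≤ s.card * (s.card * b) := by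
    refine (sq_sum_le_card_mul_sum_sq (s := s) (f := fun i => √(a i))).trans_eq ?_
    rw [← hbs]
    congr 1
    exact Finset.sum_congr rfl fun i _ => Real.sq_sqrt (ha0 i)
  have hocc := mul_occupation_le (n := s.card) (a := b) hR (hs.trans (by linarith)) hb1
  apply Real.le_sqrt_of_sq_le
  rw [mul_pow, Real.sq_sqrt (by positivity)]
  calc F / (1 + F) * (∑ i ∈ s, √(a i)) ^ 2
      ≤ F / (1 + F) * (s.card * (s.card * b)) := by gcongr
    _ = s.card * (s.card * b * (F / (1 + F))) := by ring
    _ ≤ s.card * (s.card * b * (R * (1 + R) ^ s.card * (1 - b) ^ s.card /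
      (1 + R * (1 + R) ^ s.card * (1 - b) ^ s.card))) := by gcongr
    _ ≤ s.card * (R / (1 + R)) := by gcongr
    _ ≤ 1 - δ := by rwa [← mul_div_assoc]

theorem exists_fixed_point {lam : ℝ} (hlam : 0 < lam) (n : ℕ) :
    ∃ R : ℝ, 0 < R ∧ lam = R * (1 + R) ^ n := by
  have hc : ContinuousOn (fun R : ℝ => R * (1 + R) ^ n) (Set.Icc 0 lam) := by fun_prop
  have h := intermediate_value_Icc hlam.le hc
  have hm : lam ∈ Set.Icc ((0 : ℝ) * (1 + 0) ^ n) (lam * (1 + lam) ^ n) := by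
    refine ⟨by simpa using hlam.le, ?_⟩
    have : 1 ≤ (1 + lam) ^ n := one_le_pow₀ (by linarith)
    nlinarith
  obtain ⟨R, hR, hRe⟩ := h hm
  refine ⟨R, lt_of_le_of_ne hR.1 ?_, hRe.symm⟩
  rintro rfl
  simp at hRe
  linarith


/-- One step of the recursion contracts differences in the coordinate `arsinh √R`. -/
theorem abs_arsinh_sub_le {ι : Type*} (s : Finset ι) (t t' : ι → ℝ) (ht : ∀ i, 0 ≤ t i)
    (ht' : ∀ i, 0 ≤ t' i) {R δ lam m : ℝ} (hR : 0 < R) (hlam : lam = R * (1 + R) ^ s.card)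
    (hs : s.card * R / (1 + R) ≤ 1 - δ) (hδ : 0 < δ) (hm0 : 0 ≤ m)
    (hm : ∀ i ∈ s, |t i - t' i| ≤ m) :
    |Real.arsinh √(lam * ∏ i ∈ s, (Real.cosh (t i) ^ 2)⁻¹) -
      Real.arsinh √(lam * ∏ i ∈ s, (Real.cosh (t' i) ^ 2)⁻¹)| ≤ √(1 - δ) * m := by
  have hlam0 : 0 < lam := by rw [hlam]; positivity
  set τ : ℝ → ι → ℝ := fun x i => t' i + x * (t i - t' i) with hτ
  set y : ℝ → ℝ := fun x => √lam * ∏ i ∈ s, (Real.cosh (τ x i))⁻¹ with hy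
  have hcosh : ∀ z : ℝ, 0 < Real.cosh z := Real.cosh_pos
  have hy0 : ∀ x, 0 < y x := fun x =>
    mul_pos (Real.sqrt_pos.2 hlam0) (Finset.prod_pos fun i _ => inv_pos.2 (hcosh _))
  have hysq : ∀ x, y x ^ 2 = lam * ∏ i ∈ s, (Real.cosh (τ x i) ^ 2)⁻¹ := fun x => by
    simp only [hy, mul_pow, Real.sq_sqrt hlam0.le, ← Finset.prod_pow, inv_pow]
  have hyexp : ∀ x, y x = √lam * Real.exp (-∑ i ∈ s, Real.log (Real.cosh (τ x i))) := fun x => by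
    rw [← Finset.sum_neg_distrib (f := fun i => Real.log (Real.cosh (τ x i))), Real.exp_sum]
    simp only [hy, Real.exp_neg, Real.exp_log (hcosh _)]
  have hderiv : ∀ x, HasDerivAt y
      (y x * -∑ i ∈ s, Real.sinh (τ x i) * (t i - t' i) / Real.cosh (τ x i)) x := fun x => by
    have h1 : ∀ i ∈ s, HasDerivAt (fun x => Real.log (Real.cosh (τ x i)))
        (Real.sinh (τ x i) * (t i - t' i) / Real.cosh (τ x i)) x := fun i _ => by
      have h0 : HasDerivAt (fun x => τ x i) (t i - t' i) x := by
        have h := ((hasDerivAt_id x).mul_const (t i - t' i)).const_add (t' i)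
        rwa [one_mul] at h
      exact h0.cosh.log (hcosh _).ne'
    have h2 := ((HasDerivAt.fun_sum h1).neg.exp).const_mul (√lam)
    rw [hyexp x, funext hyexp, mul_assoc]
    exact h2
  have hbound : ∀ x ∈ Set.Icc (0 : ℝ) 1, ‖(√(1 + y x ^ 2))⁻¹ *
      (y x * -∑ i ∈ s, Real.sinh (τ x i) * (t i - t' i) / Real.cosh (τ x i))‖ ≤
        √(1 - δ) * m := fun x hx => by
    have hτ0 : ∀ i, 0 ≤ τ x i := fun i => by
      have : τ x i = (1 - x) * t' i + x * t i := by simp only [hτ]; ring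
      rw [this]
      exact add_nonneg (mul_nonneg (by linarith [hx.2]) (ht' i)) (mul_nonneg hx.1 (ht i))
    have hone : ∀ i, 1 - Real.tanh (τ x i) ^ 2 = (Real.cosh (τ x i) ^ 2)⁻¹ := fun i => by
      rw [Real.tanh_eq_sinh_div_cosh, div_pow, Real.sinh_sq]
      have := (hcosh (τ x i)).ne'
      field_simp
      ring
    have hkey := sqrt_mul_sum_sqrt_le s (fun i => Real.tanh (τ x i) ^ 2)
      (fun i => sq_nonneg _) (fun i => by
        have := hone i
        have : 0 < (Real.cosh (τ x i) ^ 2)⁻¹ := inv_pos.2 (pow_pos (hcosh _) 2)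
        linarith) hR hlam hs hδ
    simp only [hone, ← hysq] at hkey
    have htanh : ∀ i, 0 ≤ Real.tanh (τ x i) := fun i => by
      rw [Real.tanh_eq_sinh_div_cosh]
      exact div_nonneg (Real.sinh_nonneg_iff.2 (hτ0 i)) (hcosh _).le
    simp only [Real.sqrt_sq (htanh _)] at hkey
    rw [Real.sqrt_div (sq_nonneg _), Real.sqrt_sq (hy0 x).le] at hkey
    have hsum : |∑ i ∈ s, Real.sinh (τ x i) * (t i - t' i) / Real.cosh (τ x i)| ≤
        (∑ i ∈ s, Real.tanh (τ x i)) * m := by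
      rw [Finset.sum_mul]
      refine (Finset.abs_sum_le_sum_abs _ _).trans (Finset.sum_le_sum fun i hi => ?_)
      rw [mul_div_right_comm, ← Real.tanh_eq_sinh_div_cosh, abs_mul, abs_of_nonneg (htanh i)]
      exact mul_le_mul_of_nonneg_left (hm i hi) (htanh i)
    rw [Real.norm_eq_abs, abs_mul, abs_mul, abs_neg, abs_of_pos (hy0 x), abs_inv,
      abs_of_nonneg (Real.sqrt_nonneg _)]
    calc (√(1 + y x ^ 2))⁻¹ *
          (y x * |∑ i ∈ s, Real.sinh (τ x i) * (t i - t' i) / Real.cosh (τ x i)|)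
        ≤ (√(1 + y x ^ 2))⁻¹ * (y x * ((∑ i ∈ s, Real.tanh (τ x i)) * m)) := by
          have := (hy0 x).le
          gcongr
      _ = (y x / √(1 + y x ^ 2) * ∑ i ∈ s, Real.tanh (τ x i)) * m := by ring
      _ ≤ √(1 - δ) * m := by gcongr
  have hmvt := (convex_Icc (0 : ℝ) 1).norm_image_sub_le_of_norm_hasDerivWithin_le
    (f := fun x => Real.arsinh (y x)) (fun x _ => (hderiv x).arsinh.hasDerivWithinAt) hbound
    (Set.left_mem_Icc.2 zero_le_one) (Set.right_mem_Icc.2 zero_le_one)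
  have hτ1 : τ 1 = t := by funext i; simp [hτ]
  have hτ0 : τ 0 = t' := by funext i; simp [hτ]
  have e1 : √(lam * ∏ i ∈ s, (Real.cosh (t i) ^ 2)⁻¹) = y 1 := by
    rw [← hτ1, ← hysq, Real.sqrt_sq (hy0 1).le]
  have e0 : √(lam * ∏ i ∈ s, (Real.cosh (t' i) ^ 2)⁻¹) = y 0 := by
    rw [← hτ0, ← hysq, Real.sqrt_sq (hy0 0).le]
  rw [e1, e0]
  simpa using hmvt

/-- `log (1 + R)` is Lipschitz in the coordinate `arsinh √R`. -/
theorem one_add_le_mul_exp {x y lam : ℝ} (hx0 : 0 ≤ x) (hy0 : 0 ≤ y) (hx : x ≤ lam) (hy : y ≤ lam) :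
    1 + x ≤ (1 + y) * Real.exp (2 * √lam * |Real.arsinh √x - Real.arsinh √y|) := by
  have hmvt := fun u v =>
    (convex_Icc (0 : ℝ) (Real.arsinh √lam)).norm_image_sub_le_of_norm_hasDerivWithin_le
    (x := u) (y := v) (f := fun t => Real.log (Real.cosh t))
    (f' := fun t => Real.sinh t / Real.cosh t) (C := √lam)
    (fun t _ => ((Real.hasDerivAt_cosh t).log (Real.cosh_pos t).ne').hasDerivWithinAt)
    (fun t ht => by
      have h0 : 0 ≤ Real.sinh t := Real.sinh_nonneg_iff.2 ht.1
      rw [Real.norm_eq_abs, abs_of_nonneg (div_nonneg h0 (Real.cosh_pos t).le)]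
      refine (div_le_self h0 (Real.one_le_cosh t)).trans ?_
      rw [← Real.sinh_arsinh √lam]
      exact Real.sinh_le_sinh.2 ht.2)
  have hmem : ∀ z, 0 ≤ z → z ≤ lam → Real.arsinh √z ∈ Set.Icc (0 : ℝ) (Real.arsinh √lam) :=
    fun z _ hz => ⟨Real.arsinh_nonneg_iff.2 (Real.sqrt_nonneg _),
      Real.arsinh_le_arsinh.2 (Real.sqrt_le_sqrt hz)⟩
  have h := hmvt _ _ (hmem y hy0 hy) (hmem x hx0 hx)
  have hlog : ∀ z, 0 ≤ z → Real.log (Real.cosh (Real.arsinh √z)) = Real.log (1 + z) / 2 :=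
    fun z hz => by
      rw [Real.cosh_arsinh, Real.sq_sqrt hz, Real.log_sqrt (by linarith)]
  rw [hlog x hx0, hlog y hy0, Real.norm_eq_abs, Real.norm_eq_abs] at h
  have h' := (le_abs_self _).trans h
  have hle : Real.log (1 + x) ≤ Real.log (1 + y) +
      2 * √lam * |Real.arsinh √x - Real.arsinh √y| := by linarith
  calc 1 + x = Real.exp (Real.log (1 + x)) := (Real.exp_log (by linarith)).symm
    _ ≤ _ := Real.exp_le_exp.2 hle
    _ = _ := by rw [Real.exp_add, Real.exp_log (by linarith)]

theorem arsinh_le_self {x : ℝ} (hx : 0 ≤ x) : Real.arsinh x ≤ x := by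
  rw [← Real.sinh_le_sinh, Real.sinh_arsinh]
  exact Real.self_le_sinh_iff.2 hx

/-- Below the uniqueness threshold `lam` is of order `1 / d`. -/
theorem mul_le_sixteen {d : ℕ} (hd : 2 ≤ d) {R : ℝ} (hR : 0 < R) (hs : d * R / (1 + R) ≤ 1) :
    d * (R * (1 + R) ^ d) ≤ 16 := by
  have hd' : (2 : ℝ) ≤ d := by exact_mod_cast hd
  rw [div_le_one (by linarith)] at hs
  have hdR : d * R ≤ 2 := by nlinarith
  have hexp : (1 + R) ^ d ≤ 8 := by
    calc (1 + R) ^ d ≤ Real.exp R ^ d := by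
          gcongr
          linarith [Real.add_one_le_exp R]
      _ = Real.exp (d * R) := by rw [← Real.exp_nat_mul]
      _ ≤ Real.exp 2 := Real.exp_le_exp.2 hdR
      _ = Real.exp 1 ^ 2 := by rw [← Real.exp_nat_mul]; norm_num
      _ ≤ 2.72 ^ 2 := by
          gcongr
          exact Real.exp_one_lt_d9.le.trans (by norm_num)
      _ ≤ 8 := by norm_num
  calc d * (R * (1 + R) ^ d) = d * R * (1 + R) ^ d := by ring
    _ ≤ 2 * 8 := by gcongr
    _ = 16 := by norm_num

/-- The occupation odds of `u` when each child `w` of `u` is occupied with probability `p w`. -/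
def odds {V : Type*} (ch : V → Finset V) (lam : ℝ) (p : V → ℝ) (u : V) : ℝ :=
  lam * ∏ w ∈ ch u, (1 - p w)

/-- One step of the tree recursion on occupation probabilities. -/
def occStep {V : Type*} (ch : V → Finset V) (lam : ℝ) (p : V → ℝ) (u : V) : ℝ :=
  odds ch lam p u / (1 + odds ch lam p u)

/-- The odds of `u` when the vertices `k + 1` levels below `u` have occupation probabilities `p`. -/
def levelOdds {V : Type*} (ch : V → Finset V) (lam : ℝ) (k : ℕ) (p : V → ℝ) (u : V) : ℝ :=
  odds ch lam ((occStep ch lam)^[k] p) u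

section Recursion

variable {V : Type*} {ch : V → Finset V} {lam : ℝ} {p p' : V → ℝ}

theorem odds_mem_Icc (hlam : 0 < lam) (hp : ∀ u, 0 ≤ p u ∧ p u ≤ 1) (u : V) :
    0 ≤ odds ch lam p u ∧ odds ch lam p u ≤ lam :=
  ⟨mul_nonneg hlam.le (Finset.prod_nonneg fun w _ => by linarith [(hp w).2]),
    mul_le_of_le_one_right hlam.le
      (Finset.prod_le_one (fun w _ => by linarith [(hp w).2]) fun w _ => by linarith [(hp w).1])⟩

theorem occStep_iterate_mem_Icc (hlam : 0 < lam) (hp : ∀ u, 0 ≤ p u ∧ p u ≤ 1) (k : ℕ) (u : V) :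
    0 ≤ (occStep ch lam)^[k] p u ∧ (occStep ch lam)^[k] p u ≤ 1 := by
  induction k generalizing u with
  | zero => exact hp u
  | succ k ih =>
    rw [Function.iterate_succ_apply']
    have h := odds_mem_Icc (ch := ch) hlam ih u
    exact ⟨div_nonneg h.1 (by linarith), div_le_one_of_le₀ (by linarith) (by linarith)⟩

theorem levelOdds_mem_Icc (hlam : 0 < lam) (hp : ∀ u, 0 ≤ p u ∧ p u ≤ 1) (k : ℕ) (u : V) :
    0 ≤ levelOdds ch lam k p u ∧ levelOdds ch lam k p u ≤ lam :=
  odds_mem_Icc hlam (occStep_iterate_mem_Icc hlam hp k) u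

theorem occStep_iterate_succ (k : ℕ) (u : V) :
    (occStep ch lam)^[k + 1] p u = levelOdds ch lam k p u / (1 + levelOdds ch lam k p u) := by
  rw [Function.iterate_succ_apply']; rfl

theorem levelOdds_succ (hlam : 0 < lam) (hp : ∀ u, 0 ≤ p u ∧ p u ≤ 1) (k : ℕ) (u : V) :
    levelOdds ch lam (k + 1) p u = lam * ∏ w ∈ ch u, (1 + levelOdds ch lam k p w)⁻¹ := by
  rw [levelOdds, odds]
  congr 1
  refine Finset.prod_congr rfl fun w _ => ?_
  have := (levelOdds_mem_Icc (ch := ch) hlam hp k w).1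
  rw [occStep_iterate_succ]
  field_simp
  ring

theorem eq_of_occStep_iterate_ne (hch : ∀ u u' w, w ∈ ch u → w ∈ ch u' → u = u') {v : V}
    (hpp : ∀ x, x ≠ v → p x = p' x) (k : ℕ) {w w' : V}
    (hw : (occStep ch lam)^[k] p w ≠ (occStep ch lam)^[k] p' w)
    (hw' : (occStep ch lam)^[k] p w' ≠ (occStep ch lam)^[k] p' w') : w = w' := by
  have child : ∀ (q q' : V → ℝ) (u : V), occStep ch lam q u ≠ occStep ch lam q' u →
      ∃ c ∈ ch u, q c ≠ q' c := fun q q' u h => by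
    contrapose! h
    have : odds ch lam q u = odds ch lam q' u := by
      rw [odds, odds, Finset.prod_congr rfl fun c hc => by rw [h c hc]]
    rw [occStep, occStep, this]
  induction k generalizing w w' with
  | zero => rw [not_imp_comm.1 (hpp w) hw, not_imp_comm.1 (hpp w') hw']
  | succ k ih =>
    rw [Function.iterate_succ_apply', Function.iterate_succ_apply'] at hw hw'
    obtain ⟨c, hc, hcne⟩ := child _ _ _ hw
    obtain ⟨c', hc', hcne'⟩ := child _ _ _ hw'
    obtain rfl := ih hcne hcne'
    exact hch _ _ _ hc hc'

/-- Only one child of `u` feels a change at the single vertex `v`. -/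
theorem abs_levelOdds_succ_sub_le (hlam : 0 < lam)
    (hch : ∀ u u' w, w ∈ ch u → w ∈ ch u' → u = u') {v : V}
    (hp : ∀ u, 0 ≤ p u ∧ p u ≤ 1) (hp' : ∀ u, 0 ≤ p' u ∧ p' u ≤ 1)
    (hpp : ∀ x, x ≠ v → p x = p' x) (k : ℕ) (u : V) :
    |levelOdds ch lam (k + 1) p u - levelOdds ch lam (k + 1) p' u| ≤
      levelOdds ch lam (k + 1) p u * ∑ w ∈ ch u,
        |levelOdds ch lam k p w - levelOdds ch lam k p' w| / (1 + levelOdds ch lam k p' w) := by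
  have hL := fun w => (levelOdds_mem_Icc (ch := ch) hlam hp k w).1
  have hL' := fun w => (levelOdds_mem_Icc (ch := ch) hlam hp' k w).1
  have hterm : ∀ w, 0 ≤ |levelOdds ch lam k p w - levelOdds ch lam k p' w| /
      (1 + levelOdds ch lam k p' w) := fun w => div_nonneg (abs_nonneg _) (by linarith [hL' w])
  have hone : ∀ w, levelOdds ch lam k p w = levelOdds ch lam k p' w ∨
      (occStep ch lam)^[k + 1] p w ≠ (occStep ch lam)^[k + 1] p' w := fun w => by
    by_contra! h
    refine h.1 ?_
    have h2 := h.2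
    rw [occStep_iterate_succ, occStep_iterate_succ, div_eq_div_iff
      (by linarith [hL w]) (by linarith [hL' w])] at h2
    linarith
  by_cases hall : ∀ w ∈ ch u, levelOdds ch lam k p w = levelOdds ch lam k p' w
  · have : levelOdds ch lam (k + 1) p u = levelOdds ch lam (k + 1) p' u := by
      rw [levelOdds_succ hlam hp, levelOdds_succ hlam hp',
        Finset.prod_congr rfl fun w hw => by rw [hall w hw]]
    rw [this, sub_self, abs_zero]
    exact mul_nonneg (levelOdds_mem_Icc hlam hp' _ u).1 (Finset.sum_nonneg fun w _ => hterm w)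
  · push Not at hall
    obtain ⟨w₀, hw₀, hne⟩ := hall
    have hne' := (hone w₀).resolve_left hne
    have hrest : ∏ w ∈ (ch u).erase w₀, (1 + levelOdds ch lam k p' w)⁻¹ =
        ∏ w ∈ (ch u).erase w₀, (1 + levelOdds ch lam k p w)⁻¹ := by
      refine Finset.prod_congr rfl fun w hw => ?_
      rcases hone w with h | h
      · rw [h]
      · exact absurd (eq_of_occStep_iterate_ne hch hpp (k + 1) h hne') (Finset.ne_of_mem_erase hw)
    have hle := Finset.single_le_sum (f := fun w => |levelOdds ch lam k p w -
      levelOdds ch lam k p' w| / (1 + levelOdds ch lam k p' w)) (fun w _ => hterm w) hw₀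
    refine le_trans (le_of_eq ?_)
      (mul_le_mul_of_nonneg_left hle (levelOdds_mem_Icc (ch := ch) hlam hp (k + 1) u).1)
    rw [levelOdds_succ hlam hp, levelOdds_succ hlam hp', ← Finset.mul_prod_erase _ _ hw₀,
      ← Finset.mul_prod_erase (ch u) (fun w => (1 + levelOdds ch lam k p' w)⁻¹) hw₀, hrest]
    have hP : 0 ≤ ∏ w ∈ (ch u).erase w₀, (1 + levelOdds ch lam k p w)⁻¹ :=
      Finset.prod_nonneg fun w _ => inv_nonneg.2 (by linarith [hL w])
    generalize ∏ w ∈ (ch u).erase w₀, (1 + levelOdds ch lam k p w)⁻¹ = P at hP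
    have h1 : 0 < 1 + levelOdds ch lam k p w₀ := by linarith [hL w₀]
    have h2 : 0 < 1 + levelOdds ch lam k p' w₀ := by linarith [hL' w₀]
    generalize levelOdds ch lam k p w₀ = x at h1
    generalize levelOdds ch lam k p' w₀ = y at h2
    have : lam * ((1 + x)⁻¹ * P) - lam * ((1 + y)⁻¹ * P) =
        (lam * ((1 + x)⁻¹ * P) / (1 + y)) * (y - x) := by
      field_simp
      ring
    have h3 : 0 ≤ lam * ((1 + x)⁻¹ * P) / (1 + y) := by positivity
    rw [this, abs_mul, abs_of_nonneg h3, abs_sub_comm y x]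
    ring

variable {r : V} {δ : ℝ}

/-- The effect of the boundary on the odds decays exponentially in the coordinate `arsinh √R`. -/
theorem abs_arsinh_levelOdds_sub_le (hlam : 0 < lam) (hδ : 0 < δ)
    (hroot : ∀ u, ∀ w ∈ ch u, w ≠ r)
    (hfix : ∀ u, u ≠ r → ∃ R : ℝ, 0 < R ∧ lam = R * (1 + R) ^ (ch u).card ∧
      (ch u).card * R / (1 + R) ≤ 1 - δ)
    (hp : ∀ u, 0 ≤ p u ∧ p u ≤ 1) (hp' : ∀ u, 0 ≤ p' u ∧ p' u ≤ 1) (k : ℕ) (u : V) (hu : u ≠ r) :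
    |Real.arsinh √(levelOdds ch lam k p u) - Real.arsinh √(levelOdds ch lam k p' u)| ≤
      √lam * √(1 - δ) ^ k := by
  induction k generalizing u with
  | zero =>
    have key : ∀ q : V → ℝ, (∀ u, 0 ≤ q u ∧ q u ≤ 1) →
        0 ≤ Real.arsinh √(levelOdds ch lam 0 q u) ∧
          Real.arsinh √(levelOdds ch lam 0 q u) ≤ √lam := fun q hq =>
      ⟨Real.arsinh_nonneg_iff.2 (Real.sqrt_nonneg _),
        (arsinh_le_self (Real.sqrt_nonneg _)).trans
          (Real.sqrt_le_sqrt (levelOdds_mem_Icc hlam hq 0 u).2)⟩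
    rw [pow_zero, mul_one, abs_le]
    constructor <;> linarith [(key p hp).1, (key p hp).2, (key p' hp').1, (key p' hp').2]
  | succ k ih =>
    obtain ⟨R, hR, hlamR, hs⟩ := hfix u hu
    have hcosh : ∀ q : V → ℝ, (∀ u, 0 ≤ q u ∧ q u ≤ 1) → ∀ w,
        Real.cosh (Real.arsinh √(levelOdds ch lam k q w)) ^ 2 = 1 + levelOdds ch lam k q w :=
      fun q hq w => by
        have := (levelOdds_mem_Icc (ch := ch) hlam hq k w).1
        rw [Real.cosh_arsinh, Real.sq_sqrt this, Real.sq_sqrt (by linarith)]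
    have h := abs_arsinh_sub_le (ch u) (fun w => Real.arsinh √(levelOdds ch lam k p w))
      (fun w => Real.arsinh √(levelOdds ch lam k p' w))
      (fun w => Real.arsinh_nonneg_iff.2 (Real.sqrt_nonneg _))
      (fun w => Real.arsinh_nonneg_iff.2 (Real.sqrt_nonneg _)) hR hlamR hs hδ
      (m := √lam * √(1 - δ) ^ k) (by positivity) (fun w hw => ih w (hroot u w hw))
    simp only [hcosh p hp, hcosh p' hp'] at h
    rw [← levelOdds_succ hlam hp, ← levelOdds_succ hlam hp'] at h
    exact h.trans_eq (by ring)

/-- Odds under two boundary conditions agree up to a factor tending to one. -/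
theorem one_add_levelOdds_le (hlam : 0 < lam) (hδ : 0 < δ)
    (hroot : ∀ u, ∀ w ∈ ch u, w ≠ r)
    (hfix : ∀ u, u ≠ r → ∃ R : ℝ, 0 < R ∧ lam = R * (1 + R) ^ (ch u).card ∧
      (ch u).card * R / (1 + R) ≤ 1 - δ)
    (hp : ∀ u, 0 ≤ p u ∧ p u ≤ 1) (hp' : ∀ u, 0 ≤ p' u ∧ p' u ≤ 1) (k : ℕ) (u : V) (hu : u ≠ r) :
    (1 + levelOdds ch lam k p u)⁻¹ ≤
      (1 + levelOdds ch lam k p' u)⁻¹ * Real.exp (2 * lam * √(1 - δ) ^ k) := by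
  have h := levelOdds_mem_Icc (ch := ch) hlam hp k u
  have h' := levelOdds_mem_Icc (ch := ch) hlam hp' k u
  have hle := one_add_le_mul_exp h'.1 h.1 h'.2 h.2
  have hab := abs_arsinh_levelOdds_sub_le hlam hδ hroot hfix hp' hp k u hu
  have hexp : Real.exp (2 * √lam * |Real.arsinh √(levelOdds ch lam k p' u) -
      Real.arsinh √(levelOdds ch lam k p u)|) ≤ Real.exp (2 * lam * √(1 - δ) ^ k) := by
    refine Real.exp_le_exp.2 ?_
    calc _ ≤ 2 * √lam * (√lam * √(1 - δ) ^ k) := by gcongr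
      _ = 2 * (√lam * √lam) * √(1 - δ) ^ k := by ring
      _ = _ := by rw [Real.mul_self_sqrt hlam.le]
  have h0 : 0 < 1 + levelOdds ch lam k p u := by linarith
  have h0' : 0 < 1 + levelOdds ch lam k p' u := by linarith
  have hfin := hle.trans (mul_le_mul_of_nonneg_left hexp h0.le)
  rw [inv_mul_eq_div, le_div_iff₀ h0', inv_mul_le_iff₀ h0]
  exact hfin

end Recursion

section Influence

theorem abs_levelOdds_zero_sub_le {V : Type*} {ch : V → Finset V} {lam : ℝ} (hlam : 0 < lam)
    {v : V} {p p' : V → ℝ}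
    (hp : ∀ u, 0 ≤ p u ∧ p u ≤ 1) (hp' : ∀ u, 0 ≤ p' u ∧ p' u ≤ 1)
    (hpp : ∀ x, x ≠ v → p x = p' x) (u : V) :
    |levelOdds ch lam 0 p u - levelOdds ch lam 0 p' u| ≤ if v ∈ ch u then lam else 0 := by
  have h := levelOdds_mem_Icc (ch := ch) hlam hp 0 u
  have h' := levelOdds_mem_Icc (ch := ch) hlam hp' 0 u
  split_ifs with hv
  · rw [abs_le]; constructor <;> linarith
  · have : levelOdds ch lam 0 p u = levelOdds ch lam 0 p' u := by
      simp only [levelOdds, odds, Function.iterate_zero, id]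
      rw [Finset.prod_congr rfl fun w hw => by rw [hpp w (fun h => hv (h ▸ hw))]]
    rw [this, sub_self, abs_zero]

variable {V : Type*} [Fintype V] {ch : V → Finset V} {lam δ : ℝ} {r : V}

/-- A bound on the influence of single vertices on the odds of a non-root vertex, whose total
decays exponentially with the distance. -/
theorem exists_influence_bound (hlam : 0 < lam) (hδ : 0 < δ) (hlam8 : lam ≤ 8)
    (hch : ∀ u u' w, w ∈ ch u → w ∈ ch u' → u = u')
    (hroot : ∀ u, ∀ w ∈ ch u, w ≠ r)
    (hfix : ∀ u, u ≠ r → ∃ R : ℝ, 0 < R ∧ lam = R * (1 + R) ^ (ch u).card ∧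
      (ch u).card * R / (1 + R) ≤ 1 - δ)
    (hcard : ∀ u, u ≠ r → (ch u).card * lam ≤ 16) (k : ℕ) :
    ∃ I : V → V → ℝ,
      (∀ u, u ≠ r → ∀ v, ∀ p p' : V → ℝ, (∀ u, 0 ≤ p u ∧ p u ≤ 1) → (∀ u, 0 ≤ p' u ∧ p' u ≤ 1) →
        (∀ x, x ≠ v → p x = p' x) →
        |levelOdds ch lam k p u - levelOdds ch lam k p' u| ≤ I u v) ∧
      ∀ u, u ≠ r → ∑ v, I u v ≤
        16 / √lam * √(1 - δ) ^ k * Real.exp (48 * ∑ j ∈ range k, √(1 - δ) ^ j) *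
          √(levelOdds ch lam k 0 u * (1 + levelOdds ch lam k 0 u)) := by
  have hzero : ∀ u : V, 0 ≤ (0 : V → ℝ) u ∧ (0 : V → ℝ) u ≤ 1 := fun u => by simp
  have hsl : 0 < √lam := Real.sqrt_pos.2 hlam
  induction k with
  | zero =>
    refine ⟨fun u v => if v ∈ ch u then lam else 0, fun u _ v p p' hp hp' hpp =>
      abs_levelOdds_zero_sub_le hlam hp hp' hpp u, fun u hu => ?_⟩
    · have h0 : levelOdds ch lam 0 0 u = lam := by simp [levelOdds, odds]
      rw [h0, Finset.sum_ite_mem, Finset.univ_inter, Finset.sum_const, nsmul_eq_mul]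
      refine (hcard u hu).trans ?_
      simp only [pow_zero, range_zero, sum_empty, mul_zero, Real.exp_zero, mul_one]
      have : √lam ≤ √(lam * (1 + lam)) := Real.sqrt_le_sqrt (by nlinarith)
      calc (16 : ℝ) = 16 / √lam * √lam := by field_simp
        _ ≤ _ := by gcongr
  | succ k ih =>
    obtain ⟨I, hI, hIsum⟩ := ih
    have hL0 := fun k u => (levelOdds_mem_Icc (ch := ch) hlam hzero k u).1
    set q := √(1 - δ) with hq
    have hq0 : 0 ≤ q := Real.sqrt_nonneg _
    set D := 16 / √lam * q ^ k * Real.exp (48 * ∑ j ∈ range k, q ^ j) with hD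
    have hD0 : 0 ≤ D := by positivity
    refine ⟨fun u v => Real.exp (48 * q ^ k) * levelOdds ch lam (k + 1) 0 u *
      ∑ w ∈ ch u, (1 + levelOdds ch lam k 0 w)⁻¹ * I w v, fun u hu v p p' hp hp' hpp => ?_,
      fun u hu => ?_⟩
    · have hodds : levelOdds ch lam (k + 1) p u ≤
          levelOdds ch lam (k + 1) 0 u * Real.exp (32 * q ^ k) := by
        rw [levelOdds_succ hlam hp, levelOdds_succ hlam hzero, mul_assoc]
        refine mul_le_mul_of_nonneg_left ?_ hlam.le
        calc ∏ w ∈ ch u, (1 + levelOdds ch lam k p w)⁻¹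
            ≤ ∏ w ∈ ch u, (1 + levelOdds ch lam k 0 w)⁻¹ * Real.exp (2 * lam * q ^ k) := by
              refine Finset.prod_le_prod (fun w _ => inv_nonneg.2 ?_) fun w hw =>
                one_add_levelOdds_le hlam hδ hroot hfix hp hzero k w (hroot u w hw)
              linarith [(levelOdds_mem_Icc (ch := ch) hlam hp k w).1]
          _ = (∏ w ∈ ch u, (1 + levelOdds ch lam k 0 w)⁻¹) *
              Real.exp ((ch u).card * lam * (2 * q ^ k)) := by
              rw [Finset.prod_mul_distrib, Finset.prod_const, ← Real.exp_nat_mul]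
              ring_nf
          _ ≤ (∏ w ∈ ch u, (1 + levelOdds ch lam k 0 w)⁻¹) * Real.exp (32 * q ^ k) := by
              refine mul_le_mul_of_nonneg_left (Real.exp_le_exp.2 ?_)
                (Finset.prod_nonneg fun w _ => inv_nonneg.2 (by linarith [hL0 k w]))
              calc (ch u).card * lam * (2 * q ^ k) ≤ 16 * (2 * q ^ k) := by
                    gcongr
                    exact hcard u hu
                _ = _ := by ring
      have hsum : ∑ w ∈ ch u, |levelOdds ch lam k p w - levelOdds ch lam k p' w| /
          (1 + levelOdds ch lam k p' w) ≤
          (∑ w ∈ ch u, (1 + levelOdds ch lam k 0 w)⁻¹ * I w v) * Real.exp (16 * q ^ k) := by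
        rw [Finset.sum_mul]
        refine Finset.sum_le_sum fun w hw => ?_
        have h1 := hI w (hroot u w hw) v p p' hp hp' hpp
        have h2 := one_add_levelOdds_le hlam hδ hroot hfix hp' hzero k w (hroot u w hw)
        have h3 : Real.exp (2 * lam * q ^ k) ≤ Real.exp (16 * q ^ k) :=
          Real.exp_le_exp.2 (by gcongr; linarith)
        have h4 : 0 ≤ (1 + levelOdds ch lam k 0 w)⁻¹ := inv_nonneg.2 (by linarith [hL0 k w])
        have h5 : 0 ≤ I w v := (abs_nonneg _).trans h1
        rw [div_eq_mul_inv]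
        calc |levelOdds ch lam k p w - levelOdds ch lam k p' w| *
              (1 + levelOdds ch lam k p' w)⁻¹
            ≤ I w v * ((1 + levelOdds ch lam k 0 w)⁻¹ * Real.exp (16 * q ^ k)) := by
              refine mul_le_mul h1 (h2.trans (mul_le_mul_of_nonneg_left h3 h4))
                (inv_nonneg.2 ?_) h5
              linarith [(levelOdds_mem_Icc (ch := ch) hlam hp' k w).1]
          _ = _ := by ring
      refine (abs_levelOdds_succ_sub_le hlam hch hp hp' hpp k u).trans ?_
      calc _ ≤ (levelOdds ch lam (k + 1) 0 u * Real.exp (32 * q ^ k)) *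
            ((∑ w ∈ ch u, (1 + levelOdds ch lam k 0 w)⁻¹ * I w v) * Real.exp (16 * q ^ k)) := by
            refine mul_le_mul hodds hsum (Finset.sum_nonneg fun w _ =>
              div_nonneg (abs_nonneg _) ?_) (mul_nonneg (hL0 _ _) (Real.exp_nonneg _))
            linarith [(levelOdds_mem_Icc (ch := ch) hlam hp' k w).1]
        _ = (Real.exp (32 * q ^ k) * Real.exp (16 * q ^ k)) * levelOdds ch lam (k + 1) 0 u *
            ∑ w ∈ ch u, (1 + levelOdds ch lam k 0 w)⁻¹ * I w v := by ring
        _ = _ := by rw [← Real.exp_add]; ring_nf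
    · obtain ⟨R, hR, hlamR, hs⟩ := hfix u hu
      have hocc : ∀ w, 1 - levelOdds ch lam k 0 w / (1 + levelOdds ch lam k 0 w) =
          (1 + levelOdds ch lam k 0 w)⁻¹ := fun w => by
        have := hL0 k w
        field_simp
        ring
      have hkey := sqrt_mul_sum_sqrt_le (ch u)
        (fun w => levelOdds ch lam k 0 w / (1 + levelOdds ch lam k 0 w))
        (fun w => div_nonneg (hL0 k w) (by linarith [hL0 k w]))
        (fun w => by
          have h := hL0 k w
          rw [div_lt_one (by linarith)]
          linarith) hR hlamR hs hδ
      simp only [hocc] at hkey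
      rw [← levelOdds_succ hlam hzero] at hkey
      have hF := hL0 (k + 1) u
      set F := levelOdds ch lam (k + 1) 0 u with hFdef
      have hswap : ∑ v, Real.exp (48 * q ^ k) * F *
          ∑ w ∈ ch u, (1 + levelOdds ch lam k 0 w)⁻¹ * I w v =
          Real.exp (48 * q ^ k) * F *
            ∑ w ∈ ch u, (1 + levelOdds ch lam k 0 w)⁻¹ * ∑ v, I w v := by
        rw [← Finset.mul_sum, Finset.sum_comm]
        simp only [Finset.mul_sum]
      have hsplit : F = √(F * (1 + F)) * √(F / (1 + F)) := by
        rw [← Real.sqrt_mul (by positivity)]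
        have : F * (1 + F) * (F / (1 + F)) = F * F := by field_simp
        rw [this, Real.sqrt_mul_self hF]
      have hinner : ∑ w ∈ ch u, (1 + levelOdds ch lam k 0 w)⁻¹ * ∑ v, I w v ≤
          D * ∑ w ∈ ch u, √(levelOdds ch lam k 0 w / (1 + levelOdds ch lam k 0 w)) := by
        rw [Finset.mul_sum]
        refine Finset.sum_le_sum fun w hw => ?_
        have h := hL0 k w
        have hx : 0 < 1 + levelOdds ch lam k 0 w := by linarith
        refine (mul_le_mul_of_nonneg_left (hIsum w (hroot u w hw)) (inv_nonneg.2 hx.le)).trans_eq ?_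
        have : √(levelOdds ch lam k 0 w * (1 + levelOdds ch lam k 0 w)) =
            √(levelOdds ch lam k 0 w / (1 + levelOdds ch lam k 0 w)) *
              (1 + levelOdds ch lam k 0 w) := by
          rw [← Real.sqrt_sq hx.le, ← Real.sqrt_mul (by rw [Real.sqrt_sq hx.le]; positivity),
            Real.sqrt_sq hx.le]
          congr 1
          field_simp
        rw [this]
        field_simp
      rw [hswap]
      calc Real.exp (48 * q ^ k) * F * ∑ w ∈ ch u, (1 + levelOdds ch lam k 0 w)⁻¹ * ∑ v, I w v
          ≤ Real.exp (48 * q ^ k) * F *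
            (D * ∑ w ∈ ch u, √(levelOdds ch lam k 0 w / (1 + levelOdds ch lam k 0 w))) := by
            gcongr
        _ = Real.exp (48 * q ^ k) * D * √(F * (1 + F)) * (√(F / (1 + F)) *
            ∑ w ∈ ch u, √(levelOdds ch lam k 0 w / (1 + levelOdds ch lam k 0 w))) := by
            conv_lhs => rw [hsplit]
            ring
        _ ≤ Real.exp (48 * q ^ k) * D * √(F * (1 + F)) * q := by gcongr
        _ = _ := by
            rw [hD, Finset.sum_range_succ, mul_add 48, Real.exp_add]
            ring

theorem geom_sum_sqrt_le (hδ : 0 < δ) (hδ1 : δ < 1) (k : ℕ) :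
    ∑ j ∈ range k, √(1 - δ) ^ j ≤ 2 / δ := by
  have hq0 : 0 ≤ √(1 - δ) := Real.sqrt_nonneg _
  have hq : √(1 - δ) ≤ 1 - δ / 2 :=
    Real.sqrt_le_iff.2 ⟨by linarith, by nlinarith⟩
  have h := geom_sum_mul_neg √(1 - δ) k
  have hs : 0 ≤ ∑ j ∈ range k, √(1 - δ) ^ j := Finset.sum_nonneg fun j _ => by positivity
  have hpow : 0 ≤ √(1 - δ) ^ k := by positivity
  rw [le_div_iff₀ hδ]
  nlinarith

/-- A bound on the influence of single vertices on the odds of the root. -/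
theorem exists_root_influence_bound (hlam : 0 < lam) (hδ : 0 < δ) (hδ1 : δ < 1) (hlam8 : lam ≤ 8)
    (hch : ∀ u u' w, w ∈ ch u → w ∈ ch u' → u = u')
    (hroot : ∀ u, ∀ w ∈ ch u, w ≠ r)
    (hfix : ∀ u, u ≠ r → ∃ R : ℝ, 0 < R ∧ lam = R * (1 + R) ^ (ch u).card ∧
      (ch u).card * R / (1 + R) ≤ 1 - δ)
    (hcard : ∀ u, u ≠ r → (ch u).card * lam ≤ 16) (hcardr : (ch r).card * lam ≤ 24) (k : ℕ) :
    ∃ J : V → ℝ,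
      (∀ v, ∀ p p' : V → ℝ, (∀ u, 0 ≤ p u ∧ p u ≤ 1) → (∀ u, 0 ≤ p' u ∧ p' u ≤ 1) →
        (∀ x, x ≠ v → p x = p' x) →
        |levelOdds ch lam k p r - levelOdds ch lam k p' r| ≤ J v) ∧
      ∑ v, J v ≤ 1152 * Real.exp (96 / δ) * √(1 - δ) ^ (k - 1) := by
  have hzero : ∀ u : V, 0 ≤ (0 : V → ℝ) u ∧ (0 : V → ℝ) u ≤ 1 := fun u => by simp
  have hsl : 0 < √lam := Real.sqrt_pos.2 hlam
  cases k with
  | zero =>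
    refine ⟨fun v => if v ∈ ch r then lam else 0, fun v p p' hp hp' hpp =>
      abs_levelOdds_zero_sub_le hlam hp hp' hpp r, ?_⟩
    · rw [Finset.sum_ite_mem, Finset.univ_inter, Finset.sum_const, nsmul_eq_mul]
      have : 1 ≤ Real.exp (96 / δ) := Real.one_le_exp (by positivity)
      rw [Nat.zero_sub, pow_zero, mul_one]
      linarith
  | succ k =>
    obtain ⟨I, hI, hIsum⟩ :=
      exists_influence_bound hlam hδ hlam8 hch hroot hfix hcard k
    refine ⟨fun v => lam * ∑ w ∈ ch r, I w v, fun v p p' hp hp' hpp => ?_, ?_⟩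
    · refine (abs_levelOdds_succ_sub_le hlam hch hp hp' hpp k r).trans ?_
      refine mul_le_mul (levelOdds_mem_Icc hlam hp _ r).2 (Finset.sum_le_sum fun w hw => ?_)
        (Finset.sum_nonneg fun w _ => div_nonneg (abs_nonneg _) ?_) hlam.le
      · refine (div_le_self (abs_nonneg _) ?_).trans (hI w (hroot r w hw) v p p' hp hp' hpp)
        linarith [(levelOdds_mem_Icc (ch := ch) hlam hp' k w).1]
      · linarith [(levelOdds_mem_Icc (ch := ch) hlam hp' k w).1]
    · have hw : ∀ w ∈ ch r, ∑ v, I w v ≤ 48 * Real.exp (96 / δ) * √(1 - δ) ^ k := by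
        intro w hw
        refine (hIsum w (hroot r w hw)).trans ?_
        have hL := levelOdds_mem_Icc (ch := ch) hlam hzero k w
        have h1 : √(levelOdds ch lam k 0 w * (1 + levelOdds ch lam k 0 w)) ≤ √lam * 3 := by
          have h9 : (3 : ℝ) = √9 := by
            rw [show (9 : ℝ) = 3 ^ 2 by norm_num, Real.sqrt_sq (by norm_num)]
          rw [h9, ← Real.sqrt_mul hlam.le]
          refine Real.sqrt_le_sqrt (mul_le_mul hL.2 ?_ ?_ hlam.le) <;> linarith
        have h2 : Real.exp (48 * ∑ j ∈ range k, √(1 - δ) ^ j) ≤ Real.exp (96 / δ) := by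
          refine Real.exp_le_exp.2 ?_
          calc 48 * ∑ j ∈ range k, √(1 - δ) ^ j ≤ 48 * (2 / δ) := by
                gcongr
                exact geom_sum_sqrt_le hδ hδ1 k
            _ = 96 / δ := by ring
        calc _ ≤ 16 / √lam * √(1 - δ) ^ k * Real.exp (96 / δ) * (√lam * 3) := by gcongr
          _ = _ := by field_simp; ring
      rw [← Finset.mul_sum, Finset.sum_comm, Nat.add_sub_cancel]
      calc lam * ∑ w ∈ ch r, ∑ v, I w v
          ≤ lam * ∑ w ∈ ch r, 48 * Real.exp (96 / δ) * √(1 - δ) ^ k := by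
            gcongr with w hw'
            exact hw w hw'
        _ = (ch r).card * lam * (48 * Real.exp (96 / δ) * √(1 - δ) ^ k) := by
            rw [Finset.sum_const, nsmul_eq_mul]; ring
        _ ≤ 24 * (48 * Real.exp (96 / δ) * √(1 - δ) ^ k) := by gcongr
        _ = _ := by ring

end Influence

/-- The neighbours of `u` that are further away from the root `r`. -/
def children (G : SimpleGraph V) (r u : V) : Finset V :=
  Finset.univ.filter fun w => G.Adj u w ∧ G.dist r w = G.dist r u + 1

section Tree

variable {G : SimpleGraph V} {r : V}

theorem mem_children {u w : V} :
    w ∈ children G r u ↔ G.Adj u w ∧ G.dist r w = G.dist r u + 1 := by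
  simp [children]

theorem mem_levelSet {ℓ : ℕ} {v : V} : v ∈ levelSet G r ℓ ↔ G.dist r v = ℓ := by
  simp [levelSet]

theorem ne_root_of_mem_children {u w : V} (h : w ∈ children G r u) : w ≠ r := by
  rintro rfl
  have := (mem_children.1 h).2
  simp at this

theorem parent_unique (hG : G.IsTree) {u u' w : V} (h : w ∈ children G r u)
    (h' : w ∈ children G r u') : u = u' := by
  obtain ⟨ha, hd⟩ := mem_children.1 h
  obtain ⟨ha', hd'⟩ := mem_children.1 h'
  obtain ⟨q, hq, hql⟩ := hG.connected.exists_path_of_dist r u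
  obtain ⟨q', hq', hql'⟩ := hG.connected.exists_path_of_dist r u'
  have hpath := (q.concat ha).isPath_of_length_eq_dist (by simp [hd, hql])
  have hpath' := (q'.concat ha').isPath_of_length_eq_dist (by simp [hd', hql'])
  have := congrArg (fun x : G.Path r w => x.1.penultimate)
    ((hG.isAcyclic.subsingleton_path r w).elim ⟨_, hpath⟩ ⟨_, hpath'⟩)
  simpa using this

theorem exists_parent (hG : G.IsTree) {w : V} (hw : w ≠ r) : ∃ u, w ∈ children G r u := by
  obtain ⟨q, hq⟩ := hG.connected.exists_walk_length_eq_dist r w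
  have hnil : ¬ q.Nil := SimpleGraph.Walk.not_nil_of_ne (Ne.symm hw)
  have hadj := q.adj_penultimate hnil
  refine ⟨q.penultimate, mem_children.2 ⟨hadj, ?_⟩⟩
  have h1 : G.dist r q.penultimate ≤ q.dropLast.length := SimpleGraph.dist_le _
  have h2 := SimpleGraph.Walk.length_dropLast_add_one hnil
  have h3 := hG.dist_eq_dist_add_one_of_adj r hadj
  omega

theorem card_children_le (Δ : ℕ) (hΔ : ∀ v, (G.neighborSet v).ncard ≤ Δ) (u : V) :
    (children G r u).card ≤ Δ := by
  refine le_trans ?_ (hΔ u)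
  rw [← Set.ncard_coe_finset]
  exact Set.ncard_le_ncard fun w hw => (mem_children.1 hw).1

theorem card_children_le_pred (hG : G.IsTree) (Δ : ℕ) (hΔ : ∀ v, (G.neighborSet v).ncard ≤ Δ)
    {u : V} (hu : u ≠ r) : (children G r u).card ≤ Δ - 1 := by
  obtain ⟨a, ha⟩ := exists_parent hG hu
  obtain ⟨hadj, hd⟩ := mem_children.1 ha
  have hnot : a ∉ children G r u := fun h => by
    have := (mem_children.1 h).2
    omega
  have hsub : (↑(insert a (children G r u)) : Set V) ⊆ G.neighborSet u := by
    intro w hw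
    rcases Finset.mem_insert.1 (Finset.mem_coe.1 hw) with rfl | hw
    · exact hadj.symm
    · exact (mem_children.1 hw).1
  have := Set.ncard_le_ncard hsub
  rw [Set.ncard_coe_finset, Finset.card_insert_of_notMem hnot] at this
  have := hΔ u
  omega

theorem biUnion_children (hG : G.IsTree) (ℓ : ℕ) :
    (levelSet G r ℓ).biUnion (children G r) = levelSet G r (ℓ + 1) := by
  ext w
  simp only [Finset.mem_biUnion, mem_levelSet]
  constructor
  · rintro ⟨u, hu, hw⟩
    rw [(mem_children.1 hw).2, hu]
  · intro hw
    obtain ⟨u, hu⟩ := exists_parent hG (w := w) (r := r) (by rintro rfl; simp at hw)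
    exact ⟨u, by have := (mem_children.1 hu).2; omega, hu⟩

end Tree

section Ratio

variable {G : SimpleGraph V} {r : V} {lam : ℝ}

theorem occStep_mem_Icc (hlam : 0 < lam) {p : V → ℝ} (hp : ∀ u, 0 ≤ p u ∧ p u ≤ 1) (u : V) :
    0 ≤ occStep (children G r) lam p u ∧ occStep (children G r) lam p u ≤ 1 :=
  occStep_iterate_mem_Icc hlam hp 1 u

theorem ratio_eq_div {w : Finset V → ℝ} (hw : ∀ S, 0 ≤ w S) (x : V) :
    ratio w x = (∑ S : Finset V, if x ∈ S then w S else 0) /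
      ∑ S : Finset V, if x ∈ S then 0 else w S := by
  have hsum : ∑ S : Finset V, w S = (∑ S : Finset V, if x ∈ S then w S else 0) +
      ∑ S : Finset V, if x ∈ S then 0 else w S := by
    rw [← Finset.sum_add_distrib]
    exact Finset.sum_congr rfl fun S _ => by split_ifs <;> simp
  have ha : 0 ≤ ∑ S : Finset V, if x ∈ S then w S else 0 :=
    Finset.sum_nonneg fun S _ => by split_ifs <;> simp [hw]
  have hb : 0 ≤ ∑ S : Finset V, if x ∈ S then 0 else w S :=
    Finset.sum_nonneg fun S _ => by split_ifs <;> simp [hw]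
  rw [ratio, prMem, hsum]
  set a := ∑ S : Finset V, if x ∈ S then w S else 0
  set b := ∑ S : Finset V, if x ∈ S then 0 else w S
  rcases eq_or_ne (a + b) 0 with h | h
  · rw [show a = 0 by linarith]; simp
  · rw [one_sub_div h, add_sub_cancel_left, div_div_div_cancel_right₀ h]

theorem pinWeight_nonneg (hlam : 0 < lam) {p : V → ℝ} (hp : ∀ u, 0 ≤ p u ∧ p u ≤ 1) (ℓ : ℕ)
    (P S : Finset V) : 0 ≤ pinWeight G r lam ℓ P p S := by
  unfold pinWeight
  split_ifs
  · exact mul_nonneg (mul_nonneg (by positivity) (Finset.prod_nonneg fun u _ => (hp u).1))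
      (Finset.prod_nonneg fun u _ => by linarith [(hp u).2])
  · exact le_rfl

/-- Summing out the pinned level amounts to one step of the tree recursion. -/
theorem sum_pinWeight_union (hG : G.IsTree) (hlam : 0 < lam) {p : V → ℝ}
    (hp : ∀ u, 0 ≤ p u ∧ p u ≤ 1) (ℓ : ℕ) {S : Finset V}
    (hS : Disjoint S (levelSet G r (ℓ + 1))) :
    ∑ A ∈ (levelSet G r (ℓ + 1)).powerset,
        pinWeight G r lam (ℓ + 1) (levelSet G r (ℓ + 1)) p (S ∪ A) =
      (∏ u ∈ levelSet G r ℓ, (1 + odds (children G r) lam p u)) *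
        pinWeight G r lam ℓ (levelSet G r ℓ) (occStep (children G r) lam p) S := by
  have hodds := odds_mem_Icc (ch := children G r) hlam hp
  by_cases hval : IsIndepSet G S ∧ ∀ v ∈ S, G.dist r v ≤ ℓ
  swap
  · have hzero : ∀ A ∈ (levelSet G r (ℓ + 1)).powerset,
        pinWeight G r lam (ℓ + 1) (levelSet G r (ℓ + 1)) p (S ∪ A) = 0 := by
      intro A _
      rw [pinWeight, if_neg]
      rintro ⟨h1, h2⟩
      refine hval ⟨fun i hi j hj => h1 i (Finset.mem_union_left _ hi) j
        (Finset.mem_union_left _ hj), fun v hv => ?_⟩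
      have := h2 v (Finset.mem_union_left _ hv)
      have : G.dist r v ≠ ℓ + 1 := fun h => Finset.disjoint_left.1 hS hv (mem_levelSet.2 h)
      omega
    rw [Finset.sum_eq_zero hzero, pinWeight, if_neg hval, mul_zero]
  obtain ⟨hind, hdist⟩ := hval
  have hterm : ∀ A ∈ (levelSet G r (ℓ + 1)).powerset,
      pinWeight G r lam (ℓ + 1) (levelSet G r (ℓ + 1)) p (S ∪ A) =
        lam ^ S.card * ((∏ w ∈ A, if ∃ u ∈ S, G.Adj u w then 0 else p w) *
          ∏ w ∈ levelSet G r (ℓ + 1) \ A, (1 - p w)) := by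
    intro A hA
    have hA' : ∀ a ∈ A, G.dist r a = ℓ + 1 := fun a ha =>
      mem_levelSet.1 (Finset.mem_powerset.1 hA ha)
    have e1 : (S ∪ A).filter (fun v => G.dist r v < ℓ + 1) = S := by
      ext v
      simp only [Finset.mem_filter, Finset.mem_union]
      constructor
      · rintro ⟨h | h, h'⟩
        · exact h
        · have := hA' v h; omega
      · intro h
        exact ⟨Or.inl h, Nat.lt_succ_of_le (hdist v h)⟩
    have e2 : levelSet G r (ℓ + 1) ∩ (S ∪ A) = A := by
      rw [Finset.inter_union_distrib_left, Finset.disjoint_iff_inter_eq_empty.1 hS.symm,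
        Finset.empty_union, Finset.inter_eq_right.2 (Finset.mem_powerset.1 hA)]
    have e3 : levelSet G r (ℓ + 1) \ (S ∪ A) = levelSet G r (ℓ + 1) \ A := by
      rw [← Finset.sdiff_inter_self_left, e2]
    rw [pinWeight, e1, e2, e3]
    by_cases hex : ∃ w ∈ A, ∃ u ∈ S, G.Adj u w
    · obtain ⟨w, hw, u, hu, huw⟩ := hex
      have hzero : (∏ w ∈ A, if ∃ u ∈ S, G.Adj u w then 0 else p w) = 0 :=
        Finset.prod_eq_zero hw (if_pos ⟨u, hu, huw⟩)
      rw [if_neg, hzero, zero_mul, mul_zero]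
      exact fun h => h.1 u (Finset.mem_union_left _ hu) w (Finset.mem_union_right _ hw) huw
    · push Not at hex
      rw [if_pos, mul_assoc]
      · congr 2
        refine Finset.prod_congr rfl fun w hw => (if_neg ?_).symm
        rintro ⟨u, hu, h⟩
        exact hex w hw u hu h
      · refine ⟨fun i hi j hj hij => ?_, fun v hv => ?_⟩
        · rcases Finset.mem_union.1 hi with hi | hi <;> rcases Finset.mem_union.1 hj with hj | hj
          · exact hind i hi j hj hij
          · exact hex j hj i hi hij
          · exact hex i hi j hj hij.symm
          · exact hG.dist_ne_of_adj r hij (by rw [hA' i hi, hA' j hj])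
        · rcases Finset.mem_union.1 hv with hv | hv
          · exact (hdist v hv).trans (Nat.le_succ ℓ)
          · exact (hA' v hv).le
  rw [Finset.sum_congr rfl hterm, ← Finset.mul_sum, ← Finset.prod_add, pinWeight,
    if_pos ⟨hind, hdist⟩, ← biUnion_children hG, Finset.prod_biUnion]
  swap
  · intro u _ u' _ huu'
    exact Finset.disjoint_left.2 fun w hw hw' => huu' (parent_unique hG hw hw')
  have hprod : ∀ u ∈ levelSet G r ℓ,
      ∏ w ∈ children G r u, ((if ∃ u ∈ S, G.Adj u w then 0 else p w) + (1 - p w)) =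
        if u ∈ S then ∏ w ∈ children G r u, (1 - p w) else 1 := by
    intro u hu
    have hiff : ∀ w ∈ children G r u, (∃ u ∈ S, G.Adj u w) ↔ u ∈ S := by
      intro w hw
      refine ⟨?_, fun h => ⟨u, h, (mem_children.1 hw).1⟩⟩
      rintro ⟨u', hu', hadj⟩
      have h1 := hdist u' hu'
      have h2 := (mem_children.1 hw).2
      have h3 := mem_levelSet.1 hu
      have h4 := hG.dist_eq_dist_add_one_of_adj r hadj
      rwa [parent_unique hG hw (mem_children.2 ⟨hadj, by omega⟩)]
    split_ifs with huS
    · exact Finset.prod_congr rfl fun w hw => by rw [if_pos ((hiff w hw).2 huS), zero_add]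
    · exact Finset.prod_eq_one fun w hw => by
        rw [if_neg (mt (hiff w hw).1 huS)]; ring
  rw [Finset.prod_congr rfl hprod, ← Finset.prod_filter, Finset.filter_mem_eq_inter,
    ← Finset.prod_inter_mul_prod_sdiff (levelSet G r ℓ) S]
  have hcard : S.card = (S.filter fun v => G.dist r v < ℓ).card + (levelSet G r ℓ ∩ S).card := by
    rw [← Finset.card_filter_add_card_filter_not (s := S) (fun v => G.dist r v < ℓ)]
    congr 2
    ext v
    simp only [Finset.mem_filter, Finset.mem_inter, mem_levelSet]
    constructor
    · rintro ⟨h, h'⟩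
      exact ⟨le_antisymm (hdist v h) (not_lt.1 h'), h⟩
    · rintro ⟨h, h'⟩
      exact ⟨h', by omega⟩
  have hin : (∏ u ∈ levelSet G r ℓ ∩ S, (1 + odds (children G r) lam p u)) *
      ∏ u ∈ levelSet G r ℓ ∩ S, occStep (children G r) lam p u =
        lam ^ (levelSet G r ℓ ∩ S).card *
          ∏ u ∈ levelSet G r ℓ ∩ S, ∏ w ∈ children G r u, (1 - p w) := by
    rw [← Finset.prod_mul_distrib, ← Finset.prod_const, ← Finset.prod_mul_distrib]
    refine Finset.prod_congr rfl fun u _ => ?_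
    have := (hodds u).1
    rw [occStep, mul_div_cancel₀ _ (by positivity), odds]
  have hout : (∏ u ∈ levelSet G r ℓ \ S, (1 + odds (children G r) lam p u)) *
      ∏ u ∈ levelSet G r ℓ \ S, (1 - occStep (children G r) lam p u) = 1 := by
    rw [← Finset.prod_mul_distrib]
    refine Finset.prod_eq_one fun u _ => ?_
    have := (hodds u).1
    rw [occStep]
    field_simp
    ring
  rw [hcard, pow_add, mul_assoc, ← hin]
  linear_combination (-(lam ^ (S.filter fun v => G.dist r v < ℓ).card) *
    (∏ u ∈ levelSet G r ℓ ∩ S, (1 + odds (children G r) lam p u)) *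
      ∏ u ∈ levelSet G r ℓ ∩ S, occStep (children G r) lam p u) * hout

theorem sum_pinWeight_succ (hG : G.IsTree) (hlam : 0 < lam) {p : V → ℝ}
    (hp : ∀ u, 0 ≤ p u ∧ p u ≤ 1) (ℓ : ℕ) (c : Finset V → ℝ)
    (hc : ∀ S, c (S \ levelSet G r (ℓ + 1)) = c S) :
    ∑ S, c S * pinWeight G r lam (ℓ + 1) (levelSet G r (ℓ + 1)) p S =
      (∏ u ∈ levelSet G r ℓ, (1 + odds (children G r) lam p u)) *
        ∑ S, c S * pinWeight G r lam ℓ (levelSet G r ℓ) (occStep (children G r) lam p) S := by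
  rw [← Finset.sum_fiberwise (s := Finset.univ) (g := fun S => S \ levelSet G r (ℓ + 1)),
    Finset.mul_sum]
  refine Finset.sum_congr rfl fun S _ => ?_
  by_cases hS : Disjoint S (levelSet G r (ℓ + 1))
  · rw [mul_left_comm, ← sum_pinWeight_union hG hlam hp ℓ hS, Finset.mul_sum]
    symm
    refine Finset.sum_bij' (fun A _ => S ∪ A) (fun B _ => B ∩ levelSet G r (ℓ + 1)) ?_ ?_ ?_ ?_ ?_
    · intro A hA
      simp only [Finset.mem_filter, Finset.mem_univ, true_and]
      rw [Finset.union_sdiff_distrib, Finset.sdiff_eq_self_of_disjoint hS,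
        Finset.sdiff_eq_empty_iff_subset.2 (Finset.mem_powerset.1 hA), Finset.union_empty]
    · intro B _
      exact Finset.mem_powerset.2 Finset.inter_subset_right
    · intro A hA
      rw [Finset.union_inter_distrib_right, Finset.disjoint_iff_inter_eq_empty.1 hS,
        Finset.empty_union, Finset.inter_eq_left.2 (Finset.mem_powerset.1 hA)]
    · intro B hB
      rw [← (Finset.mem_filter.1 hB).2, Finset.sdiff_union_inter]
    · intro A hA
      rw [← hc (S ∪ A), Finset.union_sdiff_distrib, Finset.sdiff_eq_self_of_disjoint hS,
        Finset.sdiff_eq_empty_iff_subset.2 (Finset.mem_powerset.1 hA), Finset.union_empty]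
  · obtain ⟨v, hv, hv'⟩ := Finset.not_disjoint_iff.1 hS
    rw [Finset.sum_eq_zero, pinWeight, if_neg, mul_zero, mul_zero]
    · intro h
      have := h.2 v hv
      rw [mem_levelSet.1 hv'] at this
      omega
    · intro B hB
      exact absurd (by rw [← (Finset.mem_filter.1 hB).2]; exact Finset.sdiff_disjoint) hS

theorem ratio_pinWeight_succ (hG : G.IsTree) (hlam : 0 < lam) {p : V → ℝ}
    (hp : ∀ u, 0 ≤ p u ∧ p u ≤ 1) (ℓ : ℕ) :
    ratio (pinWeight G r lam (ℓ + 1) (levelSet G r (ℓ + 1)) p) r =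
      ratio (pinWeight G r lam ℓ (levelSet G r ℓ) (occStep (children G r) lam p)) r := by
  have hodds := odds_mem_Icc (ch := children G r) hlam hp
  have hr : r ∉ levelSet G r (ℓ + 1) := fun h => by
    have := mem_levelSet.1 h
    simp at this
  have hC : ∏ u ∈ levelSet G r ℓ, (1 + odds (children G r) lam p u) ≠ 0 :=
    Finset.prod_ne_zero_iff.2 fun u _ => by have := (hodds u).1; positivity
  rw [ratio_eq_div (pinWeight_nonneg hlam hp _ _),
    ratio_eq_div (pinWeight_nonneg hlam (occStep_mem_Icc hlam hp) _ _)]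
  have h1 := sum_pinWeight_succ hG hlam hp ℓ (r := r) (fun S => if r ∈ S then 1 else 0)
    fun S => by simp [hr]
  have h2 := sum_pinWeight_succ hG hlam hp ℓ (r := r) (fun S => if r ∈ S then 0 else 1)
    fun S => by simp [hr]
  simp only [ite_mul, one_mul, zero_mul] at h1 h2
  rw [h1, h2, mul_div_mul_left _ _ hC]

theorem ratio_pinWeight_zero (hG : G.IsTree) (hlam : 0 < lam) {p : V → ℝ}
    (hp : ∀ u, 0 ≤ p u ∧ p u ≤ 1) :
    ratio (pinWeight G r lam 0 (levelSet G r 0) p) r = p r / (1 - p r) := by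
  have hlevel : levelSet G r 0 = {r} := by
    ext v
    rw [mem_levelSet, hG.connected.dist_eq_zero_iff, Finset.mem_singleton, eq_comm]
  have hzero : ∀ S : Finset V, S ≠ ∅ → S ≠ {r} → pinWeight G r lam 0 {r} p S = 0 := by
    intro S h1 h2
    rw [pinWeight, if_neg]
    rintro ⟨-, h⟩
    rcases Finset.subset_singleton_iff.1 (fun v hv => Finset.mem_singleton.2
      (hG.connected.dist_eq_zero_iff.1 (Nat.le_zero.1 (h v hv))).symm : S ⊆ {r}) with h | h
    exacts [h1 h, h2 h]
  rw [ratio_eq_div (pinWeight_nonneg hlam hp _ _), hlevel,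
    Finset.sum_eq_single_of_mem {r} (Finset.mem_univ _),
    Finset.sum_eq_single_of_mem ∅ (Finset.mem_univ _)]
  · simp [pinWeight, IsIndepSet]
  · intro S _ hS
    split_ifs with h
    · rfl
    · exact hzero S hS (by rintro rfl; simp at h)
  · intro S _ hS
    split_ifs with h
    · exact hzero S (by rintro rfl; simp at h) hS
    · rfl

theorem ratio_pinWeight_eq_levelOdds (hG : G.IsTree) (hlam : 0 < lam) {p : V → ℝ}
    (hp : ∀ u, 0 ≤ p u ∧ p u ≤ 1) (k : ℕ) :
    ratio (pinWeight G r lam (k + 1) (levelSet G r (k + 1)) p) r =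
      levelOdds (children G r) lam k p r := by
  induction k generalizing p with
  | zero =>
    have hodds := (odds_mem_Icc (ch := children G r) hlam hp r).1
    rw [ratio_pinWeight_succ hG hlam hp, ratio_pinWeight_zero hG hlam
      (occStep_mem_Icc hlam hp), occStep, levelOdds, Function.iterate_zero, id]
    field_simp
    simp
  | succ k ih =>
    rw [ratio_pinWeight_succ hG hlam hp, ih (occStep_mem_Icc hlam hp)]
    rfl

theorem wIn_eq_pinWeight (v : V) (p : V → ℝ) :
    wIn G r lam v p = pinWeight G r lam (G.dist r v) (levelSet G r (G.dist r v))
      (Function.update p v 1) := by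
  have hv : v ∈ levelSet G r (G.dist r v) := mem_levelSet.2 rfl
  ext S
  rw [wIn]
  unfold pinWeight
  by_cases hS : v ∈ S
  · rw [if_pos hS]
    congr 2
    · congr 1
      rw [Finset.erase_inter, Finset.prod_update_of_mem (Finset.mem_inter.2 ⟨hv, hS⟩), one_mul,
        Finset.sdiff_singleton_eq_erase]
    · rw [Finset.erase_sdiff_comm, Finset.erase_eq_of_notMem (by simp [hS])]
      refine Finset.prod_congr rfl fun u hu => ?_
      rw [Function.update_of_ne]
      rintro rfl
      exact (Finset.mem_sdiff.1 hu).2 hS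
  · rw [if_neg hS, Finset.prod_eq_zero (s := levelSet G r (G.dist r v) \ S)
      (Finset.mem_sdiff.2 ⟨hv, hS⟩) (by simp), mul_zero, ite_self]

theorem wOut_eq_pinWeight (v : V) (p : V → ℝ) :
    wOut G r lam v p = pinWeight G r lam (G.dist r v) (levelSet G r (G.dist r v))
      (Function.update p v 0) := by
  have hv : v ∈ levelSet G r (G.dist r v) := mem_levelSet.2 rfl
  ext S
  rw [wOut]
  unfold pinWeight
  by_cases hS : v ∈ S
  · rw [if_neg (not_not.2 hS), Finset.prod_eq_zero (s := levelSet G r (G.dist r v) ∩ S)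
      (Finset.mem_inter.2 ⟨hv, hS⟩) (by simp), mul_zero, zero_mul, ite_self]
  · rw [if_pos hS]
    congr 2
    · congr 1
      rw [Finset.erase_inter, Finset.erase_eq_of_notMem (by simp [hS])]
      refine Finset.prod_congr rfl fun u hu => ?_
      rw [Function.update_of_ne]
      rintro rfl
      exact hS (Finset.mem_inter.1 hu).2
    · rw [Finset.erase_sdiff_comm, ← Finset.mul_prod_erase (levelSet G r (G.dist r v) \ S) _
        (Finset.mem_sdiff.2 ⟨hv, hS⟩), Function.update_self, sub_zero, one_mul]
      refine Finset.prod_congr rfl fun u hu => ?_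
      rw [Function.update_of_ne (Finset.ne_of_mem_erase hu)]

theorem Rpseudo_le (hG : G.IsTree) (hlam : 0 < lam) {v : V} {k : ℕ} (hv : G.dist r v = k + 1)
    {J : ℝ} (hJ : ∀ p p' : V → ℝ, (∀ u, 0 ≤ p u ∧ p u ≤ 1) → (∀ u, 0 ≤ p' u ∧ p' u ≤ 1) →
      (∀ x, x ≠ v → p x = p' x) →
        |levelOdds (children G r) lam k p r - levelOdds (children G r) lam k p' r| ≤ J) :
    Rpseudo G r lam v ≤ J := by
  refine csSup_le ⟨_, fun _ => 0, by simp, rfl⟩ ?_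
  rintro _ ⟨p, hp, rfl⟩
  have hupdate : ∀ a : ℝ, 0 ≤ a → a ≤ 1 →
      ∀ u, 0 ≤ Function.update p v a u ∧ Function.update p v a u ≤ 1 := by
    intro a h0 h1 u
    rcases eq_or_ne u v with rfl | hu
    · simp [h0, h1]
    · simpa [hu] using hp u
  rw [wIn_eq_pinWeight, wOut_eq_pinWeight, hv,
    ratio_pinWeight_eq_levelOdds hG hlam (hupdate 1 zero_le_one le_rfl),
    ratio_pinWeight_eq_levelOdds hG hlam (hupdate 0 le_rfl zero_le_one)]
  exact hJ _ _ (hupdate 1 zero_le_one le_rfl) (hupdate 0 le_rfl zero_le_one)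
    fun x hx => by simp [hx]

end Ratio
theorem sum_Rpseudo_le {G : SimpleGraph V} (hG : G.IsTree) {Δ : ℕ} (hΔ3 : 3 ≤ Δ) {lam δ : ℝ}
    (hδ : 0 < δ) (hδ1 : δ < 1) (hlam : 0 < lam) (huniq : UpToUnique Δ lam δ)
    (hΔ : ∀ v : V, (G.neighborSet v).ncard ≤ Δ) (r : V) :
    ∑ v ∈ Finset.univ.erase r, Rpseudo G r lam v ≤
      1152 * Real.exp (96 / δ) * (1 + 2 / δ) := by
  have hΔlam : ((Δ - 1 : ℕ) : ℝ) * lam ≤ 16 := by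
    obtain ⟨R, hR, hlamR⟩ := exists_fixed_point hlam (Δ - 1)
    have h := huniq (Δ - 1) (by omega) le_rfl R hR hlamR
    have := mul_le_sixteen (d := Δ - 1) (by omega) hR (by linarith)
    rwa [← hlamR] at this
  have hpred : ((Δ - 1 : ℕ) : ℝ) = Δ - 1 := by
    rw [Nat.cast_sub (by omega), Nat.cast_one]
  have hΔ3' : (3 : ℝ) ≤ Δ := by exact_mod_cast hΔ3
  have hlam8 : lam ≤ 8 := by
    rw [hpred] at hΔlam
    nlinarith
  have hfix : ∀ u, u ≠ r → ∃ R : ℝ, 0 < R ∧ lam = R * (1 + R) ^ (children G r u).card ∧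
      (children G r u).card * R / (1 + R) ≤ 1 - δ := by
    intro u hu
    obtain ⟨R, hR, hlamR⟩ := exists_fixed_point hlam (children G r u).card
    refine ⟨R, hR, hlamR, ?_⟩
    rcases Nat.eq_zero_or_pos (children G r u).card with h | h
    · rw [h]
      simp only [Nat.cast_zero, zero_mul, zero_div]
      linarith
    · exact huniq _ h (card_children_le_pred hG Δ hΔ hu) R hR hlamR
  have hcard : ∀ u, u ≠ r → ((children G r u).card : ℝ) * lam ≤ 16 := fun u hu =>
    (mul_le_mul_of_nonneg_right (Nat.cast_le.2 (card_children_le_pred hG Δ hΔ hu)) hlam.le).trans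
      hΔlam
  have hcardr : ((children G r r).card : ℝ) * lam ≤ 24 := by
    have := mul_le_mul_of_nonneg_right
      (Nat.cast_le (α := ℝ).2 (card_children_le (r := r) Δ hΔ r)) hlam.le
    rw [hpred] at hΔlam
    linarith
  choose J hJ hJsum using exists_root_influence_bound hlam hδ hδ1 hlam8
    (fun u u' w hw hw' => parent_unique hG hw hw') (fun u w hw => ne_root_of_mem_children hw)
    hfix hcard hcardr
  have hJ0 : ∀ k v, 0 ≤ J k v := fun k v =>
    (abs_nonneg _).trans (hJ k v 0 0 (by simp) (by simp) fun _ _ => rfl)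
  set N := Finset.univ.sup (G.dist r) with hN
  calc ∑ v ∈ Finset.univ.erase r, Rpseudo G r lam v
      ≤ ∑ v ∈ Finset.univ.erase r, ∑ k ∈ Finset.range N, J k v := by
        refine Finset.sum_le_sum fun v hv => ?_
        have hpos := hG.connected.pos_dist_of_ne (Finset.ne_of_mem_erase hv).symm
        have hle : G.dist r v ≤ N := Finset.le_sup (f := G.dist r) (Finset.mem_univ v)
        exact (Rpseudo_le hG hlam (k := G.dist r v - 1) (by omega) (hJ _ v)).trans
          (Finset.single_le_sum (f := fun k => J k v) (fun k _ => hJ0 k v)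
            (Finset.mem_range.2 (by omega)))
    _ ≤ ∑ v, ∑ k ∈ Finset.range N, J k v :=
        Finset.sum_le_sum_of_subset_of_nonneg (Finset.subset_univ _)
          fun v _ _ => Finset.sum_nonneg fun k _ => hJ0 k v
    _ = ∑ k ∈ Finset.range N, ∑ v, J k v := Finset.sum_comm
    _ ≤ ∑ k ∈ Finset.range (N + 1), 1152 * Real.exp (96 / δ) * √(1 - δ) ^ (k - 1) :=
        (Finset.sum_le_sum fun k _ => hJsum k).trans
          (Finset.sum_le_sum_of_subset_of_nonneg (Finset.range_subset_range.2 (Nat.le_succ N))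
            fun k _ _ => by positivity)
    _ = 1152 * Real.exp (96 / δ) * (1 + ∑ k ∈ Finset.range N, √(1 - δ) ^ k) := by
        rw [← Finset.mul_sum, Finset.sum_range_succ']
        simp [add_comm]
    _ ≤ 1152 * Real.exp (96 / δ) * (1 + 2 / δ) := by
        have := geom_sum_sqrt_le hδ hδ1 N
        gcongr

theorem mul_exp_mul_le_exp {δ : ℝ} (hδ : 0 < δ) (hδ1 : δ < 1) :
    1152 * Real.exp (96 / δ) * (1 + 2 / δ) ≤ Real.exp (1251 / δ) := by
  have h1 : 1 ≤ 1 / δ := one_le_one_div hδ hδ1.le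
  have h2 : (1152 : ℝ) ≤ Real.exp (1152 / δ) := by
    have := Real.add_one_le_exp (1152 / δ)
    rw [show 1152 / δ = 1152 * (1 / δ) by ring] at this ⊢
    linarith
  have h3 : 1 + 2 / δ ≤ Real.exp (3 / δ) := by
    have := Real.add_one_le_exp (3 / δ)
    rw [show 3 / δ = 2 / δ + 1 / δ by ring] at this ⊢
    linarith
  calc 1152 * Real.exp (96 / δ) * (1 + 2 / δ)
      ≤ Real.exp (1152 / δ) * Real.exp (96 / δ) * Real.exp (3 / δ) := by gcongr
    _ = Real.exp (1251 / δ) := by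
        rw [← Real.exp_add, ← Real.exp_add]
        congr 1
        ring

/-- There is a universal constant `c ≥ 1` such that for every
`Δ ≥ 3`, `δ ∈ (0,1)`, `λ > 0` up-to-`Δ` unique with gap `δ`, and every finite
tree of maximum degree at most `Δ` rooted at `r`, the total `R`-pseudoinfluence
on the root is at most `exp (c/δ)`. -/
theorem statement12 :
    ∃ c : ℝ, 1 ≤ c ∧
      ∀ (Δ : ℕ), 3 ≤ Δ → ∀ δ : ℝ, 0 < δ → δ < 1 →
      ∀ lam : ℝ, 0 < lam → UpToUnique Δ lam δ →
      ∀ (V : Type) (_ : Fintype V), ∀ G : SimpleGraph V, G.IsTree →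
      (∀ v : V, (G.neighborSet v).ncard ≤ Δ) →
      ∀ r : V,
        ∑ v ∈ Finset.univ.erase r, Rpseudo G r lam v ≤ Real.exp (c / δ) := by
  refine ⟨1251, by norm_num, ?_⟩
  intro Δ hΔ3 δ hδ hδ1 lam hlam huniq V _ G hG hΔ r
  exact (sum_Rpseudo_le hG hΔ3 hδ hδ1 hlam huniq hΔ r).trans (mul_exp_mul_le_exp hδ hδ1)

end PaperStmt
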